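/- Let A be a C*-algebra and let F be a JB*-subtriple of A which is a Chebyshev subspace of A. Suppose a₁, a₂, b₁, b₂ ∈ F are such that a₁ + b₁ and a₂ + b₂ are not Brown–Pedersen quasi-invertible in F and aᵢ ⊥ bⱼ for all i, j ∈ {1,2}. Then L(b₁,b₂)L(a₁,a₂)(x) ∈ F for every x ∈ A, where L(u,v)(z) = (u v* z + z v* u)/2. -/

import Mathlib

/-!
If `c ∈ F` is not Brown–Pedersen quasi-invertible, then for every `y ∈ F` the Bergmann operator
`B(c, y)` has a nonzero value `d ∈ F`. With `y` a regularised inverse of `c` obtained from the odd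
functional calculus `c g(c* c)`, which stays in `F`, this `d` is orthogonal to an element `e ∈ F` of
norm at most one. The contraction `P x = e e* x e* e` preserves `F`, so the nearest point `v` to a
fixed point `x` of `P` is fixed as well, and `x - v` is orthogonal to `d`. Hence adding to `v` a
multiple of `d` of norm `‖x - v‖` yields another nearest point unless `x = v`: the fixed points of
`P` lie in `F`. They include `s w s` for truncations `s` of `c` converging to `c`, so `c A c ⊆ F`.
For `c = a + b` with `a ⊥ b` this contains `a a* A b* b`, and therefore `a A b ⊆ F`.
-/

open Filter Topology

section Chebyshev

/-- A Chebyshev set: every point of the ambient space has a unique nearest point in `S`. A Chebyshev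
subspace is one whose carrier is a Chebyshev set; it is closed by `IsChebyshev.isClosed`. -/
def IsChebyshev {E : Type*} [SeminormedAddCommGroup E] (S : Set E) : Prop :=
  ∀ x : E, ∃! v : E, v ∈ S ∧ ‖x - v‖ = Metric.infDist x S

namespace IsChebyshev

theorem exists_isFixedPt_nearest {E : Type*} [SeminormedAddCommGroup E] {S : Set E}
    (hS : IsChebyshev S) {P : E → E} (hP : LipschitzWith 1 P) (hPS : Set.MapsTo P S S) {x : E}
    (hx : Function.IsFixedPt P x) :
    ∃ v ∈ S, Function.IsFixedPt P v ∧ ∀ u ∈ S, ‖x - u‖ ≤ ‖x - v‖ → u = v := by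
  obtain ⟨v, ⟨hv, hxv⟩, hunique⟩ := hS x
  have eq_nearest : ∀ u ∈ S, ‖x - u‖ ≤ ‖x - v‖ → u = v := fun u hu hle => by
    refine hunique u ⟨hu, le_antisymm (hle.trans_eq hxv) ?_⟩
    rw [← dist_eq_norm]
    exact Metric.infDist_le_dist_of_mem hu
  refine ⟨v, hv, eq_nearest _ (hPS hv) ?_, eq_nearest⟩
  calc ‖x - P v‖ = ‖P x - P v‖ := by rw [hx.eq]
    _ ≤ ‖x - v‖ := by simpa using hP.norm_sub_le x v

variable {E : Type*} [NormedAddCommGroup E]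

theorem isClosed {S : Set E} (hS : IsChebyshev S) : IsClosed S := by
  refine isClosed_of_closure_subset fun x hx => ?_
  obtain ⟨v, ⟨hv, hxv⟩, -⟩ := hS x
  rw [Metric.infDist_zero_of_mem_closure hx, norm_eq_zero, sub_eq_zero] at hxv
  rwa [hxv]

theorem mem_of_isFixedPt [NormedSpace ℝ E] {F : Submodule ℝ E} (hF : IsChebyshev (F : Set E))
    {P : E →+ E} (hP : LipschitzWith 1 P) (hPF : Set.MapsTo P F F) {d : E} (hd : d ∈ F)
    (hd0 : d ≠ 0)
    (hMorth : ∀ r, Function.IsFixedPt P r → ∀ t : ℝ, ‖r + t • d‖ ≤ max ‖r‖ ‖t • d‖)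
    {x : E} (hx : Function.IsFixedPt P x) : x ∈ F := by
  obtain ⟨v, hv, hPv, hunique⟩ := hF.exists_isFixedPt_nearest hP hPF hx
  have hd_norm : ‖d‖ ≠ 0 := norm_ne_zero_iff.2 hd0
  have hfixed : Function.IsFixedPt P (x - v) := by
    rw [Function.IsFixedPt, map_sub, hx.eq, hPv.eq]
  have hnorm : ‖(‖x - v‖ / ‖d‖) • d‖ = ‖x - v‖ := by
    rw [norm_smul, norm_div, norm_norm, norm_norm, div_mul_cancel₀ _ hd_norm]
  have heq : v - (‖x - v‖ / ‖d‖) • d = v := by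
    refine hunique _ (F.sub_mem hv (F.smul_mem _ hd)) ?_
    rw [← sub_add]
    exact (hMorth _ hfixed _).trans_eq (by rw [hnorm, max_self])
  rw [sub_eq_self, ← norm_eq_zero, hnorm, norm_eq_zero, sub_eq_zero] at heq
  rwa [heq]

end IsChebyshev

end Chebyshev

section Triple

section StarRing

variable {A : Type*} [NonUnitalRing A] [StarRing A]

/-- Orthogonality `a ⊥ b` of elements of a C*-algebra, regarded as a JB*-triple. -/
structure TripleOrthogonal (a b : A) : Prop where
  mul_star_eq_zero : a * star b = 0
  star_mul_eq_zero : star b * a = 0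

theorem TripleOrthogonal.symm {a b : A} (h : TripleOrthogonal a b) : TripleOrthogonal b a where
  mul_star_eq_zero := by simpa using congrArg star h.mul_star_eq_zero
  star_mul_eq_zero := by simpa using congrArg star h.star_mul_eq_zero

/-- The Bergmann operator `B(x, y)` applied to `z`. -/
def bergmann (x y z : A) : A :=
  z - x * star y * z - z * star y * x + x * star y * z * star y * x

theorem tripleOrthogonal_bergmann {x y e : A} (hye : y * star x * e = e)
    (hey : e * star x * y = e) (z : A) : TripleOrthogonal e (bergmann x y z) := by
  have hye' : star e * (x * star y) = star e := by
    simpa only [star_mul, star_star, mul_assoc] using congrArg star hye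
  have hey' : star y * (x * star e) = star e := by
    simpa only [star_mul, star_star, mul_assoc] using congrArg star hey
  refine TripleOrthogonal.symm ⟨?_, ?_⟩
  · simp only [bergmann, add_mul, sub_mul, mul_assoc, hey']
    abel
  · simp only [bergmann, mul_add, mul_sub, ← mul_assoc] at hye' ⊢
    simp only [hye']
    abel

variable [Module ℂ A]

/-- The triple product `{x, y, z}` that makes a C*-algebra a JB*-triple; as a map of `z` it is the
operator `L(x, y)`. -/
noncomputable def tripleProduct (x y z : A) : A :=
  (2 : ℂ)⁻¹ • (x * star y * z + z * star y * x)

theorem tripleProduct_self_right (x y : A) : tripleProduct x y x = x * star y * x := by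
  rw [tripleProduct, ← two_smul ℂ, inv_smul_smul₀ two_ne_zero]

theorem tripleProduct_add_tripleProduct (x y z : A) :
    tripleProduct x y z + tripleProduct x y z = x * star y * z + z * star y * x := by
  rw [tripleProduct, ← two_smul ℂ, smul_inv_smul₀ two_ne_zero]

theorem TripleOrthogonal.tripleProduct_tripleProduct [IsScalarTower ℂ A A] [SMulCommClass ℂ A A]
    {a b' : A} (h : TripleOrthogonal a b') (a' b x : A) :
    tripleProduct b b' (tripleProduct a a' x) =
      (4 : ℝ)⁻¹ • (b * (star b' * x * star a') * a + a * (star a' * x * star b') * b) := by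
  have hleft : b * star b' * (a * star a' * x) = 0 := by
    rw [mul_assoc a, mul_assoc b, ← mul_assoc _ a, h.star_mul_eq_zero, zero_mul, mul_zero]
  have hright : x * star a' * a * star b' * b = 0 := by
    rw [mul_assoc _ a, h.mul_star_eq_zero, mul_zero, zero_mul]
  simp only [tripleProduct, mul_smul_comm, smul_mul_assoc, mul_add, add_mul, hleft, hright,
    zero_add, add_zero, ← smul_add, smul_smul]
  rw [← Complex.coe_smul (4 : ℝ)⁻¹]
  norm_num [mul_assoc]

/-- Subtriples: real subspaces closed under the triple product. The JB*-subtriples are the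
complex-linear and norm-closed ones. -/
def IsSubtriple (F : Submodule ℝ A) : Prop :=
  ∀ x ∈ F, ∀ y ∈ F, ∀ z ∈ F, tripleProduct x y z ∈ F

/-- Brown–Pedersen quasi-invertibility of `x` in `F`: the Bergmann operator `B(x, y)` vanishes
on `F` for some `y ∈ F`. -/
def IsBPQuasiInvertible (F : Submodule ℝ A) (x : A) : Prop :=
  ∃ y ∈ F, ∀ z ∈ F, bergmann x y z = 0

namespace IsSubtriple

variable {F : Submodule ℝ A}

theorem mul_star_mul_self_mem (hF : IsSubtriple F) {x y : A} (hx : x ∈ F) (hy : y ∈ F) :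
    x * star y * x ∈ F :=
  tripleProduct_self_right x y ▸ hF x hx y hy x hx

theorem quadratic_quadratic_mem (hF : IsSubtriple F) {x y z : A} (hx : x ∈ F) (hy : y ∈ F)
    (hz : z ∈ F) : x * star y * z * star y * x ∈ F := by
  simpa only [star_mul, star_star, mul_assoc] using
    hF.mul_star_mul_self_mem hx (hF.mul_star_mul_self_mem hy hz)

theorem bergmann_mem (hF : IsSubtriple F) {x y z : A} (hx : x ∈ F) (hy : y ∈ F) (hz : z ∈ F) :
    bergmann x y z ∈ F := by
  have htriple := hF x hx y hy z hz
  rw [bergmann, sub_sub, ← tripleProduct_add_tripleProduct]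
  exact F.add_mem (F.sub_mem hz (F.add_mem htriple htriple)) (hF.quadratic_quadratic_mem hx hy hz)

end IsSubtriple

end StarRing

section CStarAlgebra

variable {A : Type*} [NonUnitalCStarAlgebra A]

theorem TripleOrthogonal.norm_add_le_max {a b : A} (h : TripleOrthogonal a b) :
    ‖a + b‖ ≤ max ‖a‖ ‖b‖ := by
  have hsquare : star (a + b) * (a + b) = star a * a + star b * b := by
    rw [star_add, add_mul, mul_add, mul_add, h.star_mul_eq_zero, h.symm.star_mul_eq_zero, add_zero,
      zero_add]
  have hmul : star a * a * (star b * b) = 0 := by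
    rw [mul_assoc, ← mul_assoc a, h.mul_star_eq_zero, zero_mul, mul_zero]
  have hmax := (IsSelfAdjoint.star_mul_self a).norm_add_eq_max (.star_mul_self b) hmul
  rw [← hsquare] at hmax
  simp only [CStarRing.norm_star_mul_self] at hmax
  by_contra! hlt
  obtain ⟨ha, hb⟩ := max_lt_iff.1 hlt
  exact (max_lt (mul_self_lt_mul_self (norm_nonneg a) ha)
    (mul_self_lt_mul_self (norm_nonneg b) hb)).ne' hmax

theorem IsChebyshev.mem_of_tripleOrthogonal {F : Submodule ℝ A} (hCheb : IsChebyshev (F : Set A))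
    (hF : IsSubtriple F) {e d : A} (he : e ∈ F) (he1 : ‖e‖ ≤ 1) (hd : d ∈ F) (hd0 : d ≠ 0)
    (horth : TripleOrthogonal e d) {x : A} (hx : e * star e * x * star e * e = x) : x ∈ F := by
  let P : A →+ A := (AddMonoidHom.mulRight (star e * e)).comp (AddMonoidHom.mulLeft (e * star e))
  have hPapply : ∀ z, P z = e * star e * z * (star e * e) := fun z => rfl
  have hP : LipschitzWith 1 P := by
    have hleft : ‖e * star e‖ ≤ 1 := by
      rw [CStarRing.norm_self_mul_star]
      exact mul_le_one₀ he1 (norm_nonneg e) he1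
    have hright : ‖star e * e‖ ≤ 1 := by
      rw [CStarRing.norm_star_mul_self]
      exact mul_le_one₀ he1 (norm_nonneg e) he1
    refine AddMonoidHomClass.lipschitz_of_bound_nnnorm P 1 fun z => ?_
    rw [one_mul, hPapply]
    calc ‖e * star e * z * (star e * e)‖ ≤ ‖e * star e * z‖ :=
          (norm_mul_le _ _).trans (mul_le_of_le_one_right (norm_nonneg _) hright)
      _ ≤ ‖z‖ := (norm_mul_le _ _).trans (mul_le_of_le_one_left (norm_nonneg _) hleft)
  have hfixed : Function.IsFixedPt P x := by
    rw [Function.IsFixedPt, hPapply, ← mul_assoc, hx]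
  refine hCheb.mem_of_isFixedPt hP (fun z hz => ?_) hd hd0 (fun r hr t => ?_) hfixed
  · rw [SetLike.mem_coe, hPapply, ← mul_assoc]
    exact hF.quadratic_quadratic_mem he he hz
  · refine TripleOrthogonal.norm_add_le_max ?_
    rw [← hr.eq, hPapply]
    constructor
    · rw [star_smul, mul_smul_comm, ← mul_assoc, mul_assoc _ e, horth.mul_star_eq_zero, mul_zero,
        smul_zero]
    · simp only [star_smul, smul_mul_assoc, ← mul_assoc, horth.star_mul_eq_zero, zero_mul,
        smul_zero]

end CStarAlgebra

end Triple

section Ramp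

/-- The piecewise linear cutoff that is `0` on `(-∞, δ]` and `1` on `[2δ, ∞)`, for `0 < δ`. -/
noncomputable def ramp (δ t : ℝ) : ℝ :=
  min 1 (max 0 (t / δ - 1))

@[fun_prop]
theorem continuous_ramp (δ : ℝ) : Continuous (ramp δ) := by
  unfold ramp
  fun_prop

theorem ramp_nonneg (δ t : ℝ) : 0 ≤ ramp δ t :=
  le_min zero_le_one (le_max_left _ _)

theorem ramp_le_one (δ t : ℝ) : ramp δ t ≤ 1 :=
  min_le_left _ _

@[simp]
theorem ramp_zero (δ : ℝ) : ramp δ 0 = 0 := by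
  simp [ramp]

theorem ramp_of_le {δ t : ℝ} (hδ : 0 < δ) (ht : t ≤ δ) : ramp δ t = 0 := by
  have : t / δ ≤ 1 := (div_le_one hδ).2 ht
  rw [ramp, max_eq_left (by linarith), min_eq_right zero_le_one]

theorem ramp_of_ge {δ t : ℝ} (hδ : 0 < δ) (ht : 2 * δ ≤ t) : ramp δ t = 1 := by
  have : 2 ≤ t / δ := (le_div_iff₀ hδ).2 ht
  rw [ramp, max_eq_right (by linarith), min_eq_left (by linarith)]

theorem ramp_half_mul_ramp {δ : ℝ} (hδ : 0 < δ) (t : ℝ) :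
    ramp (δ / 2) t * ramp δ t = ramp δ t := by
  rcases le_total t δ with ht | ht
  · rw [ramp_of_le hδ ht, mul_zero]
  · rw [ramp_of_ge (half_pos hδ) (by linarith), one_mul]

theorem mul_one_sub_ramp_sq_le {δ t : ℝ} (hδ : 0 < δ) (ht : 0 ≤ t) :
    t * (1 - ramp δ t) ^ 2 ≤ 2 * δ := by
  rcases le_total t (2 * δ) with htδ | htδ
  · have hsq : (1 - ramp δ t) ^ 2 ≤ 1 :=
      pow_le_one₀ (sub_nonneg.2 (ramp_le_one δ t)) (sub_le_self 1 (ramp_nonneg δ t))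
    exact (mul_le_of_le_one_right ht hsq).trans htδ
  · rw [ramp_of_ge hδ htδ]
    simpa using hδ.le

/-- The inverse `1 / t` regularised by `ramp`: continuous and zero on `(-∞, δ]`, for `0 < δ`. -/
noncomputable def rampInv (δ t : ℝ) : ℝ :=
  ramp δ t / max t δ

/-- The inverse square root `1 / √t` regularised by `ramp`: continuous and zero on `(-∞, δ]`, for
`0 < δ`. -/
noncomputable def rampInvSqrt (δ t : ℝ) : ℝ :=
  ramp δ t / √(max t δ)

theorem continuous_rampInv {δ : ℝ} (hδ : 0 < δ) : Continuous (rampInv δ) := by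
  unfold rampInv
  fun_prop (disch := exact fun t => (lt_max_of_lt_right hδ).ne')

theorem continuous_rampInvSqrt {δ : ℝ} (hδ : 0 < δ) : Continuous (rampInvSqrt δ) := by
  unfold rampInvSqrt
  fun_prop (disch := exact fun t => (Real.sqrt_pos.2 (lt_max_of_lt_right hδ)).ne')

@[simp]
theorem rampInv_zero (δ : ℝ) : rampInv δ 0 = 0 := by
  simp [rampInv]

@[simp]
theorem rampInvSqrt_zero (δ : ℝ) : rampInvSqrt δ 0 = 0 := by
  simp [rampInvSqrt]

theorem rampInv_mul_self {δ : ℝ} (hδ : 0 < δ) (t : ℝ) : rampInv δ t * t = ramp δ t := by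
  rw [rampInv]
  rcases le_total t δ with ht | ht
  · rw [ramp_of_le hδ ht, zero_div, zero_mul]
  · rw [max_eq_left ht, div_mul_cancel₀ _ (hδ.trans_le ht).ne']

theorem rampInvSqrt_mul_mul_rampInvSqrt {δ : ℝ} (hδ : 0 < δ) (t : ℝ) :
    rampInvSqrt δ t * t * rampInvSqrt δ t = ramp δ t * ramp δ t := by
  have hmax : 0 < max t δ := lt_max_of_lt_right hδ
  rw [mul_right_comm, rampInvSqrt, div_mul_div_comm, Real.mul_self_sqrt hmax.le, mul_div_assoc,
    mul_assoc, ← rampInv, rampInv_mul_self hδ]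

theorem rampInvSqrt_half_mul_mul_ramp {δ : ℝ} (hδ : 0 < δ) (t : ℝ) :
    rampInvSqrt (δ / 2) t * t * rampInvSqrt (δ / 2) t * ramp δ t = ramp δ t := by
  rw [rampInvSqrt_mul_mul_rampInvSqrt (half_pos hδ), mul_assoc, ramp_half_mul_ramp hδ,
    ramp_half_mul_ramp hδ]

theorem rampInv_half_mul_mul_rampInvSqrt {δ : ℝ} (hδ : 0 < δ) (t : ℝ) :
    rampInv (δ / 2) t * t * rampInvSqrt δ t = rampInvSqrt δ t := by
  rw [rampInv_mul_self (half_pos hδ), rampInvSqrt, ← mul_div_assoc, ramp_half_mul_ramp hδ]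

end Ramp

section OddCalculus

variable {A : Type*} [NonUnitalCStarAlgebra A]

/-- The odd functional calculus `c g(c* c)`, where `g 0 = 0`, formed without self-adjointness of
`c`. Unlike `cfcₙ g (star c * c)` itself, it lies in every closed subtriple containing `c`. -/
noncomputable def oddCalculus (c : A) (g : ℝ → ℝ) : A :=
  c * cfcₙ g (star c * c)

theorem oddCalculus_mul_star_mul_self (c : A) {g : ℝ → ℝ} (hg : Continuous g) (hg0 : g 0 = 0) :
    oddCalculus c g * (star c * c) = oddCalculus c fun t => g t * t := by
  rw [oddCalculus, oddCalculus, cfcₙ_mul .., cfcₙ_id' .., mul_assoc]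

theorem oddCalculus_mul_star_mul_oddCalculus (c : A) {g h : ℝ → ℝ} (hg : Continuous g)
    (hg0 : g 0 = 0) (hh : Continuous h) (hh0 : h 0 = 0) :
    oddCalculus c g * star c * oddCalculus c h = oddCalculus c fun t => g t * t * h t := by
  rw [oddCalculus, oddCalculus, oddCalculus, cfcₙ_mul (fun t => g t * t) h, cfcₙ_mul ..,
    cfcₙ_id' ..]
  simp only [mul_assoc]

theorem star_oddCalculus (c : A) (g : ℝ → ℝ) :
    star (oddCalculus c g) = cfcₙ g (star c * c) * star c := by
  rw [oddCalculus, star_mul, (cfcₙ_predicate g (star c * c) : IsSelfAdjoint _).star_eq]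

theorem oddCalculus_mul_star_oddCalculus (c : A) {g h : ℝ → ℝ} (hg : Continuous g)
    (hg0 : g 0 = 0) (hh : Continuous h) (hh0 : h 0 = 0) :
    oddCalculus c g * star (oddCalculus c h) = oddCalculus c (fun t => g t * h t) * star c := by
  rw [star_oddCalculus, oddCalculus, oddCalculus, cfcₙ_mul ..]
  simp only [mul_assoc]

theorem star_oddCalculus_mul_self (c : A) {g : ℝ → ℝ} (hg : Continuous g)
    (hg0 : g 0 = 0) :
    star (oddCalculus c g) * oddCalculus c g = cfcₙ (fun t => g t * t * g t) (star c * c) := by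
  rw [star_oddCalculus, oddCalculus, cfcₙ_mul (fun t => g t * t) g, cfcₙ_mul .., cfcₙ_id' ..]
  simp only [mul_assoc]

theorem norm_oddCalculus_le_one (c : A) {g : ℝ → ℝ} (hg : Continuous g) (hg0 : g 0 = 0)
    (hbound : ∀ t, |g t * t * g t| ≤ 1) : ‖oddCalculus c g‖ ≤ 1 := by
  rw [← abs_norm, ← sq_le_one_iff_abs_le_one, sq, ← CStarRing.norm_star_mul_self,
    star_oddCalculus_mul_self c hg hg0]
  exact norm_cfcₙ_le fun t _ => hbound t

theorem norm_sub_oddCalculus_sq_le (c : A) {g : ℝ → ℝ} (hg : Continuous g) (hg0 : g 0 = 0)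
    {η : ℝ} (hbound : ∀ t, 0 ≤ t → t * (1 - g t) ^ 2 ≤ η) :
    ‖c - oddCalculus c g‖ ^ 2 ≤ η := by
  have hsquare : star (c - oddCalculus c g) * (c - oddCalculus c g) =
      cfcₙ (fun t => t * (1 - g t) ^ 2) (star c * c) := by
    have hexpand : (fun t => t * (1 - g t) ^ 2) =
        fun t => t - g t * t - (t * g t - g t * t * g t) := by
      ext t
      ring
    rw [hexpand, cfcₙ_sub .., cfcₙ_sub .., cfcₙ_sub .., ← star_oddCalculus_mul_self c hg hg0,
      cfcₙ_mul .., cfcₙ_mul .., cfcₙ_id' ..]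
    simp only [star_sub, sub_mul, mul_sub, star_oddCalculus]
    simp only [oddCalculus, mul_assoc]
  let : PartialOrder A := CStarAlgebra.spectralOrder A
  have : StarOrderedRing A := CStarAlgebra.spectralOrderedRing A
  rw [sq, ← CStarRing.norm_star_mul_self, hsquare]
  refine norm_cfcₙ_le fun t ht => ?_
  have ht0 : 0 ≤ t := quasispectrum_nonneg_of_nonneg _ (star_mul_self_nonneg c) t ht
  rw [Real.norm_of_nonneg (by positivity)]
  exact hbound t ht0

theorem tendsto_oddCalculus_ramp (c : A) :
    Tendsto (fun δ => oddCalculus c (ramp δ)) (𝓝[>] 0) (𝓝 c) := by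
  have hlim : Tendsto (fun δ : ℝ => √(2 * δ)) (𝓝[>] 0) (𝓝 0) := by
    have : ContinuousAt (fun δ : ℝ => √(2 * δ)) 0 := by fun_prop
    simpa using this.tendsto.mono_left nhdsWithin_le_nhds
  refine tendsto_iff_norm_sub_tendsto_zero.2 (squeeze_zero' (.of_forall fun _ => norm_nonneg _)
    (eventually_mem_nhdsWithin.mono fun δ (hδ : 0 < δ) => ?_) hlim)
  rw [norm_sub_rev]
  exact Real.le_sqrt_of_sq_le (norm_sub_oddCalculus_sq_le c (continuous_ramp δ) (ramp_zero δ)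
    fun t ht => mul_one_sub_ramp_sq_le hδ ht)

theorem mem_closure_range_mul_star_mul_self (c : A) :
    c ∈ closure (Set.range (· * (star c * c))) := by
  refine mem_closure_of_tendsto (tendsto_oddCalculus_ramp c)
    (eventually_mem_nhdsWithin.mono fun δ (hδ : 0 < δ) => ?_)
  refine ⟨oddCalculus c (rampInv δ), ?_⟩
  simp only [oddCalculus_mul_star_mul_self c (continuous_rampInv hδ) (rampInv_zero δ),
    rampInv_mul_self hδ]

theorem mul_cfcₙ_mem {V : Submodule ℝ A} (hV : IsClosed (V : Set A)) {D : A}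
    (hD : IsSelfAdjoint D) (hVD : ∀ v ∈ V, v * D ∈ V) (g : ℝ → ℝ) {v : A} (hv : v ∈ V) :
    v * cfcₙ g D ∈ V := by
  have hadjoin : ∀ u ∈ NonUnitalStarAlgebra.adjoin ℝ {D}, ∀ v ∈ V, v * u ∈ V := fun u hu => by
    rw [← NonUnitalStarSubalgebra.mem_toNonUnitalSubalgebra,
      NonUnitalStarAlgebra.adjoin_toNonUnitalSubalgebra, Set.star_singleton, hD.star_eq,
      Set.union_self] at hu
    induction hu using NonUnitalAlgebra.adjoin_induction with
    | mem u hu => exact Set.mem_singleton_iff.1 hu ▸ hVD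
    | add u w _ _ hu hw => exact fun v hv => mul_add v u w ▸ V.add_mem (hu v hv) (hw v hv)
    | zero => exact fun v _ => (mul_zero v).symm ▸ V.zero_mem
    | mul u w _ _ hu hw => exact fun v hv => mul_assoc v u w ▸ hw _ (hu v hv)
    | smul r u _ hu => exact fun v hv => mul_smul_comm r v u ▸ V.smul_mem r (hu v hv)
  have hclosed : IsClosed {u | v * u ∈ V} := hV.preimage (by fun_prop)
  exact closure_minimal (fun u hu => hadjoin u hu v hv) hclosed (cfcₙ_mem_elemental g D)

theorem IsSubtriple.oddCalculus_mem {F : Submodule ℝ A} (hF : IsSubtriple F)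
    (hFclosed : IsClosed (F : Set A)) {c : A} (hc : c ∈ F) (g : ℝ → ℝ) : oddCalculus c g ∈ F := by
  -- On elements `v` with `v c* c = c c* v`, right multiplication by `c* c` is `{v, c, c}`.
  let V : Submodule ℝ A := F ⊓ LinearMap.eqLocus (LinearMap.mulRight ℝ (star c * c))
    (LinearMap.mulLeft ℝ (c * star c))
  have mem_V : ∀ {v}, v ∈ V ↔ v ∈ F ∧ v * (star c * c) = c * star c * v := Iff.rfl
  have hV : IsClosed (V : Set A) := hFclosed.inter (isClosed_eq
    (f := fun v => v * (star c * c)) (g := fun v => c * star c * v) (by fun_prop) (by fun_prop))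
  have hVD : ∀ v ∈ V, v * (star c * c) ∈ V := fun v hv => by
    obtain ⟨hvF, hcomm⟩ := mem_V.1 hv
    refine mem_V.2 ⟨?_, by rw [← mul_assoc (c * star c), ← hcomm]⟩
    have htriple := hF v hvF c hc c hc
    rwa [tripleProduct, mul_assoc v, ← hcomm, ← two_smul ℂ, inv_smul_smul₀ two_ne_zero] at htriple
  have hcV : c ∈ V := mem_V.2 ⟨hc, (mul_assoc _ _ _).symm⟩
  exact (mem_V.1 (mul_cfcₙ_mem hV (.star_mul_self c) hVD g hcV)).1

theorem norm_oddCalculus_rampInvSqrt_le_one (c : A) {δ : ℝ} (hδ : 0 < δ) :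
    ‖oddCalculus c (rampInvSqrt δ)‖ ≤ 1 := by
  refine norm_oddCalculus_le_one c (continuous_rampInvSqrt hδ) (rampInvSqrt_zero δ) fun t => ?_
  rw [rampInvSqrt_mul_mul_rampInvSqrt hδ, abs_mul_self]
  exact mul_le_one₀ (ramp_le_one _ t) (ramp_nonneg _ t) (ramp_le_one _ t)

theorem oddCalculus_mul_star_mul_eq_self (c : A) {g h : ℝ → ℝ} (hg : Continuous g) (hg0 : g 0 = 0)
    (hh : Continuous h) (hh0 : h 0 = 0) (hgh : ∀ t, g t * t * h t = h t) :
    oddCalculus c g * star c * oddCalculus c h = oddCalculus c h ∧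
      oddCalculus c h * star c * oddCalculus c g = oddCalculus c h := by
  rw [oddCalculus_mul_star_mul_oddCalculus c hg hg0 hh hh0,
    oddCalculus_mul_star_mul_oddCalculus c hh hh0 hg hg0]
  have hhg : ∀ t, h t * t * g t = h t := fun t => by linear_combination hgh t
  simp only [hgh, hhg, and_self]

theorem oddCalculus_rampInv_mul_star_mul_eq_self (c : A) {δ : ℝ} (hδ : 0 < δ) :
    oddCalculus c (rampInv (δ / 2)) * star c * oddCalculus c (rampInvSqrt δ) =
        oddCalculus c (rampInvSqrt δ) ∧
      oddCalculus c (rampInvSqrt δ) * star c * oddCalculus c (rampInv (δ / 2)) =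
        oddCalculus c (rampInvSqrt δ) :=
  oddCalculus_mul_star_mul_eq_self c (continuous_rampInv (half_pos hδ)) (rampInv_zero _)
    (continuous_rampInvSqrt hδ) (rampInvSqrt_zero _) (rampInv_half_mul_mul_rampInvSqrt hδ)

theorem oddCalculus_mul_star_self_mul_eq_self (c : A) {g h : ℝ → ℝ} (hg : Continuous g)
    (hg0 : g 0 = 0) (hh : Continuous h) (hh0 : h 0 = 0) (hgh : ∀ t, g t * t * g t * h t = h t) :
    oddCalculus c g * star (oddCalculus c g) * oddCalculus c h = oddCalculus c h ∧
      oddCalculus c h * star (oddCalculus c g) * oddCalculus c g = oddCalculus c h := by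
  have hgg0 : g 0 * g 0 = 0 := by rw [hg0, zero_mul]
  have hleft : ∀ t, g t * g t * t * h t = h t := fun t => by linear_combination hgh t
  have hright : ∀ t, h t * (g t * t * g t) = h t := fun t => by linear_combination hgh t
  constructor
  · rw [oddCalculus_mul_star_oddCalculus c hg hg0 hg hg0,
      oddCalculus_mul_star_mul_oddCalculus c (g := fun t => g t * g t) (by fun_prop) hgg0 hh hh0]
    simp only [hleft]
  · rw [mul_assoc, star_oddCalculus_mul_self c hg hg0, oddCalculus, mul_assoc, ← cfcₙ_mul ..]
    simp only [hright]

theorem oddCalculus_rampInvSqrt_mul_star_self_mul_eq_self (c : A) {δ : ℝ} (hδ : 0 < δ) :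
    oddCalculus c (rampInvSqrt (δ / 2)) * star (oddCalculus c (rampInvSqrt (δ / 2))) *
          oddCalculus c (ramp δ) = oddCalculus c (ramp δ) ∧
      oddCalculus c (ramp δ) * star (oddCalculus c (rampInvSqrt (δ / 2))) *
          oddCalculus c (rampInvSqrt (δ / 2)) = oddCalculus c (ramp δ) :=
  oddCalculus_mul_star_self_mul_eq_self c (continuous_rampInvSqrt (half_pos hδ))
    (rampInvSqrt_zero _) (continuous_ramp δ) (ramp_zero δ) (rampInvSqrt_half_mul_mul_ramp hδ)

end OddCalculus

section ChebyshevSubtriple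

variable {A : Type*} [NonUnitalCStarAlgebra A]

theorem IsChebyshev.mul_mul_mem {F : Submodule ℝ A} (hCheb : IsChebyshev (F : Set A))
    (hF : IsSubtriple F) {c : A} (hc : c ∈ F) (hBP : ¬ IsBPQuasiInvertible F c) (w : A) :
    c * w * c ∈ F := by
  have odd_mem : ∀ g, oddCalculus c g ∈ F := hF.oddCalculus_mem hCheb.isClosed hc
  refine hCheb.isClosed.mem_of_tendsto
    (((tendsto_oddCalculus_ramp c).mul_const w).mul (tendsto_oddCalculus_ramp c))
    (eventually_mem_nhdsWithin.mono fun δ (hδ : 0 < δ) => ?_)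
  have hδ2 := half_pos hδ
  obtain ⟨hes, hse⟩ := oddCalculus_rampInvSqrt_mul_star_self_mul_eq_self c hδ
  obtain ⟨hye, hey⟩ := oddCalculus_rampInv_mul_star_mul_eq_self c hδ2
  obtain ⟨z, hz, hd0⟩ : ∃ z ∈ F, bergmann c (oddCalculus c (rampInv (δ / 2 / 2))) z ≠ 0 := by
    simpa [IsBPQuasiInvertible] using fun h => hBP ⟨_, odd_mem _, h⟩
  refine hCheb.mem_of_tripleOrthogonal hF (odd_mem _) (norm_oddCalculus_rampInvSqrt_le_one c hδ2)
    (hF.bergmann_mem hc (odd_mem _) hz) hd0 (tripleOrthogonal_bergmann hye hey z) ?_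
  set e := oddCalculus c (rampInvSqrt (δ / 2))
  set s := oddCalculus c (ramp δ)
  calc e * star e * (s * w * s) * star e * e = (e * star e * s) * w * (s * star e * e) := by
        simp only [mul_assoc]
    _ = s * w * s := by rw [hes, hse]

theorem TripleOrthogonal.mul_mul_mem {a b : A} (h : TripleOrthogonal a b) {S : Set A}
    (hS : IsClosed S) (hmem : ∀ w, (a + b) * w * (a + b) ∈ S) (w : A) : a * w * b ∈ S := by
  have hleft : (a + b) * star a = a * star a := by
    rw [add_mul, h.symm.mul_star_eq_zero, add_zero]
  have hright : star b * (a + b) = star b * b := by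
    rw [mul_add, h.star_mul_eq_zero, zero_add]
  have hrange : ∀ u v, star (u * (a * star a)) * w * (v * (star b * b)) ∈ S := fun u v => by
    convert hmem (star a * star u * w * v * star b) using 1
    calc star (u * (a * star a)) * w * (v * (star b * b))
        = (a * star a) * (star u * w * v) * (star b * b) := by
          simp only [star_mul, star_star, mul_assoc]
      _ = (a + b) * (star a * star u * w * v * star b) * (a + b) := by
          rw [← hleft, ← hright]
          simp only [mul_assoc]
  have ha : star a ∈ closure (Set.range (· * (a * star a))) := by
    simpa only [star_star] using mem_closure_range_mul_star_mul_self (star a)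
  have hclosure := map_mem_closure₂ (f := fun p q => star p * w * q) (by fun_prop) ha
    (mem_closure_range_mul_star_mul_self b)
    (Set.forall_mem_range.2 fun u => Set.forall_mem_range.2 fun v => hrange u v)
  rwa [hS.closure_eq, star_star] at hclosure

theorem L_L_maps_into_cebysev_subtriple_general {F : Submodule ℝ A} (hF : IsSubtriple F)
    (hCheb : IsChebyshev (F : Set A)) {a₁ b₁ b₂ : A} (hmem : a₁ + b₁ ∈ F)
    (hBP : ¬ IsBPQuasiInvertible F (a₁ + b₁)) (h₁ : TripleOrthogonal a₁ b₁)
    (h₂ : TripleOrthogonal a₁ b₂) (a₂ x : A) :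
    tripleProduct b₁ b₂ (tripleProduct a₁ a₂ x) ∈ F := by
  have hcorner := hCheb.mul_mul_mem hF hmem hBP
  rw [h₂.tripleProduct_tripleProduct]
  exact F.smul_mem _ (F.add_mem
    (h₁.symm.mul_mul_mem hCheb.isClosed (by rwa [add_comm b₁]) _)
    (h₁.mul_mul_mem hCheb.isClosed hcorner _))

end ChebyshevSubtriple

/-- Let `A` be a C*-algebra and `F` a JB*-subtriple of `A` which is a
Chebyshev subspace of `A`. Suppose `a₁, a₂, b₁, b₂ ∈ F` are such that `a₁ + b₁` and
`a₂ + b₂` are not Brown–Pedersen quasi-invertible in `F` and `aᵢ ⊥ bⱼ` for all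
`i, j ∈ {1,2}`. Then `L(b₁,b₂) L(a₁,a₂) (x) ∈ F` for every `x ∈ A`, where
`L(u,v)(z) = (u v* z + z v* u)/2`. -/
theorem L_L_maps_into_cebysev_subtriple
    {A : Type*} [NonUnitalNormedRing A] [StarRing A] [CStarRing A]
    [NormedSpace ℂ A] [IsScalarTower ℂ A A] [SMulCommClass ℂ A A]
    [StarModule ℂ A] [CompleteSpace A]
    (F : Submodule ℂ A) (hFclosed : IsClosed (F : Set A))
    (hFtriple : ∀ x ∈ F, ∀ y ∈ F, ∀ z ∈ F,
      (2 : ℂ)⁻¹ • (x * star y * z + z * star y * x) ∈ F)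
    (hCheb : ∀ x : A, ∃! v : A, v ∈ F ∧ ‖x - v‖ = Metric.infDist x (F : Set A))
    (a₁ a₂ b₁ b₂ : A) (ha₁ : a₁ ∈ F) (ha₂ : a₂ ∈ F) (hb₁ : b₁ ∈ F) (hb₂ : b₂ ∈ F)
    (hBP₁ : ¬ ∃ y ∈ F, ∀ z ∈ F,
      z - (a₁ + b₁) * star y * z - z * star y * (a₁ + b₁)
        + (a₁ + b₁) * star y * z * star y * (a₁ + b₁) = 0)
    (hBP₂ : ¬ ∃ y ∈ F, ∀ z ∈ F,
      z - (a₂ + b₂) * star y * z - z * star y * (a₂ + b₂)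
        + (a₂ + b₂) * star y * z * star y * (a₂ + b₂) = 0)
    (horth : ∀ i ∈ ({a₁, a₂} : Set A), ∀ j ∈ ({b₁, b₂} : Set A),
      i * star j = 0 ∧ star j * i = 0) :
    ∀ x : A,
      (2 : ℂ)⁻¹ • (b₁ * star b₂ * ((2 : ℂ)⁻¹ • (a₁ * star a₂ * x + x * star a₂ * a₁))
        + ((2 : ℂ)⁻¹ • (a₁ * star a₂ * x + x * star a₂ * a₁)) * star b₂ * b₁) ∈ F := by
  let : NonUnitalCStarAlgebra A := {}
  have orthogonal (b) (hb : b ∈ ({b₁, b₂} : Set A)) : TripleOrthogonal a₁ b :=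
    let ⟨hmul_star, hstar_mul⟩ := horth a₁ (by simp) b hb
    ⟨hmul_star, hstar_mul⟩
  exact L_L_maps_into_cebysev_subtriple_general (F := F.restrictScalars ℝ) hFtriple hCheb
    (F.add_mem ha₁ hb₁) hBP₁ (orthogonal b₁ (by simp)) (orthogonal b₂ (by simp)) a₂
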